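/- In the setting of the ADMM scheme (4) for the elastic-net splitting (problem (3)), assume in addition that λ₂ > 0 and λ₃ > 0. Then the sequence z₁^k = (W^k, b^k, A^k, U^k, Π^k, Λ^k) converges linearly: there exist a limit point z₁* which is a primal-dual optimal point, constants C > 0 and ρ ∈ (0,1), such that ‖z₁^k − z₁*‖ ≤ C ρ^k for all k. -/

import Mathlib

open Matrix Filter

open scoped Topology

/-- The subdifferential of a real function of one variable. -/
def subdiff (g : ℝ → ℝ) (x : ℝ) : Set ℝ := {s | ∀ y, g x + s * (y - x) ≤ g y}

lemma subdiff_mono {g : ℝ → ℝ} {x y s t : ℝ} (hs : s ∈ subdiff g x) (ht : t ∈ subdiff g y) :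
    0 ≤ (s - t) * (x - y) := by
  have h1 := hs y
  have h2 := ht x
  nlinarith

lemma isClosed_subdiff (g : ℝ → ℝ) (x : ℝ) : IsClosed (subdiff g x) := by
  simp only [subdiff, Set.ofPred_forall]
  exact isClosed_iInter fun y => isClosed_le (by fun_prop) (by fun_prop)

lemma ordConnected_subdiff (g : ℝ → ℝ) (x : ℝ) : (subdiff g x).OrdConnected := by
  refine ⟨fun s hs t ht u hu y => ?_⟩
  have h1 := hs y
  have h2 := ht y
  rcases le_total x y with h | h
  · nlinarith [hu.2, mul_le_mul_of_nonneg_right hu.2 (sub_nonneg.2 h)]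
  · nlinarith [hu.1, mul_le_mul_of_nonneg_right hu.1 (sub_nonneg.2 h)]

/-- A sublinear function of one variable with slopes `-b` and `a`. -/
def hinge (a b x : ℝ) : ℝ := a * max x 0 + b * max (-x) 0

lemma hinge_smul (a b : ℝ) {t : ℝ} (ht : 0 ≤ t) (x : ℝ) : hinge a b (t * x) = t * hinge a b x := by
  have h (z : ℝ) : max (t * z) 0 = t * max z 0 := by
    rw [mul_max_of_nonneg _ _ ht, mul_zero]
  rw [hinge, hinge, ← mul_neg, h, h]
  ring

lemma mem_subdiff_hinge {a b x s : ℝ} :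
    s ∈ subdiff (hinge a b) x ↔ hinge a b x = s * x ∧ ∀ y, s * y ≤ hinge a b y := by
  constructor
  · intro hs
    have h0 := hs (0 * x)
    have h2 := hs (2 * x)
    rw [hinge_smul a b le_rfl] at h0
    rw [hinge_smul a b zero_le_two] at h2
    have hx : hinge a b x = s * x := by linarith
    exact ⟨hx, fun y => by linarith [hs y]⟩
  · rintro ⟨hx, h⟩ y
    linarith [h y]

lemma eventually_subdiff_hinge_subset (a b x : ℝ) :
    ∀ᶠ z in 𝓝 x, subdiff (hinge a b) z ⊆ subdiff (hinge a b) x := by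
  rcases lt_trichotomy x 0 with hx | rfl | hx
  · filter_upwards [gt_mem_nhds hx] with z hz s hs
    obtain ⟨h1, h2⟩ := mem_subdiff_hinge.1 hs
    refine mem_subdiff_hinge.2 ⟨?_, h2⟩
    have : x = (x / z) * z := by field_simp [hz.ne]
    rw [this, hinge_smul a b (div_nonneg_of_nonpos hx.le hz.le), h1]
    ring
  · refine Eventually.of_forall fun z s hs => ?_
    obtain ⟨h1, h2⟩ := mem_subdiff_hinge.1 hs
    exact mem_subdiff_hinge.2 ⟨by simp [hinge], h2⟩
  · filter_upwards [lt_mem_nhds hx] with z hz s hs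
    obtain ⟨h1, h2⟩ := mem_subdiff_hinge.1 hs
    refine mem_subdiff_hinge.2 ⟨?_, h2⟩
    have : x = (x / z) * z := by field_simp [hz.ne']
    rw [this, hinge_smul a b (div_nonneg hx.le hz.le), h1]
    ring

lemma hinge_convex {a b : ℝ} (ha : 0 ≤ a) (hb : 0 ≤ b) : ConvexOn ℝ Set.univ (hinge a b) := by
  have h1 : ConvexOn ℝ Set.univ fun x : ℝ => max x 0 :=
    (convexOn_id convex_univ).sup (convexOn_const 0 convex_univ)
  have h2 : ConvexOn ℝ Set.univ fun x : ℝ => max (-x) 0 :=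
    (concaveOn_id convex_univ).neg.sup (convexOn_const 0 convex_univ)
  exact (h1.smul ha).add (h2.smul hb)

/-- A linear map is bounded below on a closed cone meeting its kernel only at `0`. -/
lemma exists_antilipschitz_on_cone {E F : Type*} [NormedAddCommGroup E] [NormedSpace ℝ E]
    [FiniteDimensional ℝ E] [NormedAddCommGroup F] [NormedSpace ℝ F] (M : E →L[ℝ] F)
    {K : Set E} (hK : IsClosed K) (hcone : ∀ x ∈ K, ∀ t : ℝ, 0 ≤ t → t • x ∈ K)
    (hker : ∀ x ∈ K, M x = 0 → x = 0) : ∃ κ : ℝ, 0 ≤ κ ∧ ∀ x ∈ K, ‖x‖ ≤ κ * ‖M x‖ := by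
  have := FiniteDimensional.proper ℝ E
  have hc : IsCompact (Metric.sphere (0 : E) 1 ∩ K) := (isCompact_sphere 0 1).inter_right hK
  have hsc (x : E) (hx : x ∈ K) (h0 : x ≠ 0) : ‖x‖⁻¹ • x ∈ Metric.sphere (0 : E) 1 ∩ K :=
    ⟨by simp [norm_smul, h0], hcone x hx _ (by positivity)⟩
  rcases (Metric.sphere (0 : E) 1 ∩ K).eq_empty_or_nonempty with he | hne
  · refine ⟨0, le_rfl, fun x hx => ?_⟩
    by_cases h0 : x = 0
    · simp [h0]
    · exact absurd (he ▸ hsc x hx h0) (Set.notMem_empty _)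
  · obtain ⟨z, ⟨hz1, hzK⟩, hz⟩ := hc.exists_isMinOn hne (f := fun x => ‖M x‖) (by fun_prop)
    have hpos : 0 < ‖M z‖ := norm_pos_iff.2 fun h => by simp [hker z hzK h] at hz1
    refine ⟨‖M z‖⁻¹, by positivity, fun x hx => ?_⟩
    by_cases h0 : x = 0
    · simp [h0]
    have h1 : ‖M z‖ ≤ ‖M (‖x‖⁻¹ • x)‖ := hz (hsc x hx h0)
    have hx0 : 0 < ‖x‖ := norm_pos_iff.2 h0
    rw [map_smul, norm_smul, norm_inv, norm_norm] at h1
    field_simp at h1 ⊢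
    linarith

/-- The closed orthant of a sign pattern. -/
def orthant {ι : Type*} (σ : ι → SignType) : Set (ι → ℝ) :=
  {x | ∀ i, 0 ≤ (σ i : ℝ) * x i ∧ (σ i = 0 → x i = 0)}

/-- A Hoffman-type bound: a fibre of a linear map can be reached inside the box spanned by `x` and
a point `x₀` of the fibre, at a distance controlled by the residual. -/
lemma exists_mem_uIcc_dist_le {ι F : Type*} [Fintype ι] [NormedAddCommGroup F] [NormedSpace ℝ F]
    (M : (ι → ℝ) →L[ℝ] F) : ∃ κ : ℝ, 0 ≤ κ ∧ ∀ x x₀ : ι → ℝ,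
      ∃ z ∈ Set.uIcc x x₀, M z = M x₀ ∧ ‖z - x‖ ≤ κ * ‖M (z - x)‖ := by
  classical
  have hσ (σ : ι → SignType) : ∃ κ : ℝ, 0 ≤ κ ∧
      ((∀ x ∈ orthant σ, M x = 0 → x = 0) → ∀ x ∈ orthant σ, ‖x‖ ≤ κ * ‖M x‖) := by
    by_cases h : ∀ x ∈ orthant σ, M x = 0 → x = 0
    · obtain ⟨κ, h0, h1⟩ := exists_antilipschitz_on_cone M (K := orthant σ) (by
        simp only [orthant, Set.ofPred_forall, Set.ofPred_and]
        refine isClosed_iInter fun i => (isClosed_le (by fun_prop) (by fun_prop)).inter ?_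
        by_cases hi : σ i = 0
        · simpa [hi] using isClosed_eq (by fun_prop) (by fun_prop)
        · simp [hi]) (fun x hx t ht i => ⟨by
          have := mul_nonneg ht (hx i).1
          simp only [Pi.smul_apply, smul_eq_mul]
          linarith, fun hi => by simp [(hx i).2 hi]⟩) h
      exact ⟨κ, h0, fun _ => h1⟩
    · exact ⟨0, le_rfl, fun h' => absurd h' h⟩
  choose κ hκ0 hκ using hσ
  refine ⟨∑ σ, κ σ, Finset.sum_nonneg fun σ _ => hκ0 σ, fun x x₀ => ?_⟩
  have hcomp : IsCompact (Set.uIcc x x₀ ∩ {z | M z = M x₀}) := by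
    have hcl : IsClosed {z | M z = M x₀} := isClosed_eq M.continuous continuous_const
    have hcc : IsCompact (Set.Icc (x ⊓ x₀) (x ⊔ x₀)) := isCompact_Icc
    exact hcc.inter_right hcl
  obtain ⟨z, ⟨hzI, hzM⟩, hz⟩ := hcomp.exists_isMinOn ⟨x₀, Set.right_mem_uIcc, rfl⟩
    (f := fun z => ∑ i, (z i - x i) ^ 2) (by fun_prop)
  refine ⟨z, hzI, hzM, ?_⟩
  have hmem : z - x ∈ orthant fun i => SignType.sign (z i - x i) := fun i =>
    ⟨by rw [Pi.sub_apply, sign_mul_self]; exact abs_nonneg _, fun h => sign_eq_zero_iff.1 h⟩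
  refine (hκ _ (fun ξ hξ hMξ => ?_) _ hmem).trans (mul_le_mul_of_nonneg_right
    (Finset.single_le_sum (f := κ) (fun σ _ => hκ0 σ) (Finset.mem_univ _)) (norm_nonneg _))
  by_contra hne
  obtain ⟨j, hj⟩ := Function.ne_iff.1 hne
  have hev : ∀ᶠ ε : ℝ in 𝓝[>] 0, ∀ i, ε * |ξ i| ≤ |z i - x i| := by
    refine eventually_all.2 fun i => ?_
    by_cases hi : z i - x i = 0
    · have := (hξ i).2 (by simp [hi])
      simp [this]
    · refine nhdsWithin_le_nhds ?_
      have : Tendsto (fun ε : ℝ => ε * |ξ i|) (𝓝 0) (𝓝 (0 * |ξ i|)) := by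
        exact Continuous.tendsto (by fun_prop) 0
      rw [zero_mul] at this
      exact this.eventually_le_const (abs_pos.2 hi)
  obtain ⟨ε, hε, hε0⟩ := (hev.and self_mem_nhdsWithin).exists
  replace hε0 : 0 < ε := hε0
  have key (i : ι) : (0 ≤ z i - x i ∧ 0 ≤ ξ i ∧ ε * ξ i ≤ z i - x i) ∨
      (z i - x i ≤ 0 ∧ ξ i ≤ 0 ∧ z i - x i ≤ ε * ξ i) := by
    have h1 := hξ i
    have h2 := hε i
    rcases lt_trichotomy (z i - x i) 0 with h | h | h
    · right
      simp only [sign_neg h] at h1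
      have h3 : ξ i ≤ 0 := by simpa using h1.1
      rw [abs_of_nonpos h3, abs_of_neg h] at h2
      exact ⟨h.le, h3, by linarith⟩
    · left
      simp only [h, sign_zero] at h1
      simp [h, h1.2]
    · left
      simp only [sign_pos h] at h1
      have h3 : 0 ≤ ξ i := by simpa using h1.1
      rw [abs_of_nonneg h3, abs_of_pos h] at h2
      exact ⟨h.le, h3, h2⟩
  have hI : z - ε • ξ ∈ Set.uIcc x x₀ := by
    rw [← Set.pi_univ_uIcc] at hzI ⊢
    intro i hi
    have h1 := hzI i hi
    simp only [Set.mem_uIcc, Pi.sub_apply, Pi.smul_apply, smul_eq_mul] at h1 ⊢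
    rcases key i with ⟨h2, h3, h4⟩ | ⟨h2, h3, h4⟩
    · have := mul_nonneg hε0.le h3
      rcases h1 with h1 | h1
      · left; constructor <;> linarith
      · right; constructor <;> linarith
    · have := mul_nonneg hε0.le (neg_nonneg.2 h3)
      rcases h1 with h1 | h1
      · left; constructor <;> linarith
      · right; constructor <;> linarith
  have hM : M (z - ε • ξ) = M x₀ := by
    rw [map_sub, map_smul, hMξ, smul_zero, sub_zero]
    exact hzM
  have hlt : ∑ i, ((z - ε • ξ) i - x i) ^ 2 < ∑ i, (z i - x i) ^ 2 := by
    refine Finset.sum_lt_sum (fun i _ => ?_) ⟨j, Finset.mem_univ _, ?_⟩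
    · simp only [Pi.sub_apply, Pi.smul_apply, smul_eq_mul]
      rcases key i with ⟨h2, h3, h4⟩ | ⟨h2, h3, h4⟩
      · nlinarith [mul_nonneg hε0.le h3]
      · nlinarith [mul_nonneg hε0.le (neg_nonneg.2 h3)]
    · simp only [Pi.sub_apply, Pi.smul_apply, smul_eq_mul]
      rcases key j with ⟨h2, h3, h4⟩ | ⟨h2, h3, h4⟩
      · nlinarith [mul_pos hε0 (lt_of_le_of_ne h3 (Ne.symm hj))]
      · nlinarith [mul_pos hε0 (neg_pos.2 (lt_of_le_of_ne h3 hj))]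
  exact absurd (hz ⟨hI, hM⟩) (not_le.2 hlt)

section ADMM

variable {ι H : Type*} [Fintype ι] [NormedAddCommGroup H] [NormedSpace ℝ H]

/-- The KKT conditions of `min q(w, w) / 2 + ∑ i, g i (v i)` subject to `v = B w + d`. -/
structure IsKKT (q : H →ₗ[ℝ] H →ₗ[ℝ] ℝ) (B : H →ₗ[ℝ] ι → ℝ) (d : ι → ℝ) (g : ι → ℝ → ℝ)
    (w : H) (v π : ι → ℝ) : Prop where
  feas : ∀ i, v i = B w i + d i
  stat : ∀ h, q w h + ∑ i, B h i * π i = 0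
  sub : ∀ i, π i ∈ subdiff (g i) (v i)

/-- The optimality conditions characterising one ADMM step from `(v, π)` to `(w', v', π')` with
penalty weights `r`. -/
structure IsStep (q : H →ₗ[ℝ] H →ₗ[ℝ] ℝ) (B : H →ₗ[ℝ] ι → ℝ) (d r : ι → ℝ) (g : ι → ℝ → ℝ)
    (v π : ι → ℝ) (w' : H) (v' π' : ι → ℝ) : Prop where
  stat : ∀ h, q w' h + ∑ i, B h i * (π' i + r i * (v' i - v i)) = 0
  sub : ∀ i, π' i ∈ subdiff (g i) (v' i)
  dual : ∀ i, π' i = π i + r i * (B w' i + d i - v' i)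

/-- The weighted squared distance in which the ADMM is Fejér monotone. -/
noncomputable def energy (r v π v' π' : ι → ℝ) : ℝ := ∑ i, (r i * (v i - v' i) ^ 2 + (π i - π' i) ^ 2 / r i)

lemma energy_nonneg {r : ι → ℝ} (hr : ∀ i, 0 < r i) (v π v' π' : ι → ℝ) :
    0 ≤ energy r v π v' π' :=
  Finset.sum_nonneg fun i _ => by have := hr i; positivity

lemma exists_energy_equiv {r : ι → ℝ} (hr : ∀ i, 0 < r i) : ∃ K : ℝ, 0 < K ∧
    ∀ v π v' π' : ι → ℝ, ‖v - v'‖ ≤ K * √(energy r v π v' π') ∧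
      ‖π - π'‖ ≤ K * √(energy r v π v' π') ∧
      energy r v π v' π' ≤ K * (‖v - v'‖ ^ 2 + ‖π - π'‖ ^ 2) := by
  have hs : 0 ≤ ∑ i, (r i + 1 / r i) := Finset.sum_nonneg fun i _ => by have := hr i; positivity
  have hri (i : ι) : r i + 1 / r i ≤ ∑ i, (r i + 1 / r i) :=
    Finset.single_le_sum (f := fun i => r i + 1 / r i)
      (fun i _ => by have := hr i; positivity) (Finset.mem_univ i)
  have hr0 (i : ι) := one_div_pos.2 (hr i)
  refine ⟨1 + ∑ i, (r i + 1 / r i), by positivity, fun v π v' π' => ?_⟩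
  set K := 1 + ∑ i, (r i + 1 / r i)
  have hK : 1 ≤ K := le_add_of_nonneg_right hs
  have hE := energy_nonneg hr v π v' π'
  have hterm (i : ι) : r i * (v i - v' i) ^ 2 + (π i - π' i) ^ 2 / r i ≤ energy r v π v' π' :=
    Finset.single_le_sum (f := fun i => r i * (v i - v' i) ^ 2 + (π i - π' i) ^ 2 / r i)
      (fun i _ => by have := hr i; positivity) (Finset.mem_univ i)
  have hroot {x : ℝ} (h : x ^ 2 ≤ K * energy r v π v' π') : ‖x‖ ≤ K * √(energy r v π v' π') := by
    rw [Real.norm_eq_abs]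
    refine abs_le_of_sq_le_sq (h.trans ?_) (by positivity)
    rw [mul_pow, Real.sq_sqrt hE]
    exact mul_le_mul_of_nonneg_right (by nlinarith) hE
  refine ⟨(pi_norm_le_iff_of_nonneg (by positivity)).2 fun i => hroot ?_,
    (pi_norm_le_iff_of_nonneg (by positivity)).2 fun i => hroot ?_, ?_⟩
  · have h1 := hterm i
    have h2 : 0 ≤ (π i - π' i) ^ 2 / r i := by have := hr i; positivity
    have h3 : 1 / r i * (r i * (v i - v' i) ^ 2) = (v i - v' i) ^ 2 := by
      have := (hr i).ne'; field_simp
    rw [Pi.sub_apply, ← h3]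
    exact mul_le_mul (by linarith [hri i, hr i]) (by linarith)
      (by have := hr i; positivity) (by positivity)
  · have h1 := hterm i
    have h2 : 0 ≤ r i * (v i - v' i) ^ 2 := by have := hr i; positivity
    have h3 : r i * ((π i - π' i) ^ 2 / r i) = (π i - π' i) ^ 2 := by
      have := (hr i).ne'; field_simp
    rw [Pi.sub_apply, ← h3]
    exact mul_le_mul (by linarith [hri i, hr0 i]) (by linarith)
      (by have := hr i; positivity) (by positivity)
  · have hv (i : ι) : (v i - v' i) ^ 2 ≤ ‖v - v'‖ ^ 2 := by
      rw [← sq_abs (v i - v' i)]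
      exact pow_le_pow_left₀ (norm_nonneg _) (norm_le_pi_norm (v - v') i) 2
    have hp (i : ι) : (π i - π' i) ^ 2 ≤ ‖π - π'‖ ^ 2 := by
      rw [← sq_abs (π i - π' i)]
      exact pow_le_pow_left₀ (norm_nonneg _) (norm_le_pi_norm (π - π') i) 2
    calc energy r v π v' π'
        ≤ ∑ i, (r i + 1 / r i) * (‖v - v'‖ ^ 2 + ‖π - π'‖ ^ 2) := by
          refine Finset.sum_le_sum fun i _ => ?_
          have h1 := mul_le_mul_of_nonneg_left (hv i) (hr i).le
          have h2 := mul_le_mul_of_nonneg_left (hp i) (hr0 i).le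
          have h3 := mul_nonneg (hr i).le (sq_nonneg ‖π - π'‖)
          have h4 := mul_nonneg (hr0 i).le (sq_nonneg ‖v - v'‖)
          have h5 : (π i - π' i) ^ 2 / r i = 1 / r i * (π i - π' i) ^ 2 := by ring
          linarith
      _ = (∑ i, (r i + 1 / r i)) * (‖v - v'‖ ^ 2 + ‖π - π'‖ ^ 2) := by rw [Finset.sum_mul]
      _ ≤ K * (‖v - v'‖ ^ 2 + ‖π - π'‖ ^ 2) :=
          mul_le_mul_of_nonneg_right (by simp [K]) (by positivity)

variable {q : H →ₗ[ℝ] H →ₗ[ℝ] ℝ} {B : H →ₗ[ℝ] ι → ℝ} {d r : ι → ℝ} {g : ι → ℝ → ℝ}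

lemma IsKKT.stat_sub {ws : H} {vs πs v π v' π' : ι → ℝ} {w' : H} (hs : IsKKT q B d g ws vs πs)
    (h : IsStep q B d r g v π w' v' π') (x : H) :
    q (w' - ws) x + ∑ i, B x i * (π' i - πs i + r i * (v' i - v i)) = 0 := by
  have h1 := h.stat x
  have h2 := hs.stat x
  have h3 : ∑ i, B x i * (π' i - πs i + r i * (v' i - v i)) =
      ∑ i, B x i * (π' i + r i * (v' i - v i)) - ∑ i, B x i * πs i := by
    rw [← Finset.sum_sub_distrib]
    exact Finset.sum_congr rfl fun i _ => by ring
  rw [h3, map_sub, LinearMap.sub_apply]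
  linarith

/-- Fejér monotonicity of the ADMM, with the decrease made explicit. -/
lemma IsStep.energy_add_le (hr : ∀ i, 0 < r i) {ws : H} {vs πs v π v' π' : ι → ℝ} {w' : H}
    (hs : IsKKT q B d g ws vs πs) (h : IsStep q B d r g v π w' v' π')
    (hπ : ∀ i, π i ∈ subdiff (g i) (v i)) :
    energy r v' π' vs πs + (energy r v' π' v π + 2 * q (w' - ws) (w' - ws)) ≤
      energy r v π vs πs := by
  have hstat := hs.stat_sub h (w' - ws)
  have key : energy r v' π' vs πs + energy r v' π' v π ≤ energy r v π vs πs +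
      2 * ∑ i, B (w' - ws) i * (π' i - πs i + r i * (v' i - v i)) := by
    simp only [energy]
    rw [Finset.mul_sum, ← Finset.sum_add_distrib, ← Finset.sum_add_distrib]
    refine Finset.sum_le_sum fun i _ => ?_
    have m1 := subdiff_mono (h.sub i) (hs.sub i)
    have m2 := subdiff_mono (h.sub i) (hπ i)
    have hri := (hr i).ne'
    have hb : B (w' - ws) i = (v' i - vs i) + (π' i - π i) / r i := by
      rw [map_sub, Pi.sub_apply, hs.feas i, h.dual i]
      field_simp
      ring
    rw [hb]
    have hid : r i * (v i - vs i) ^ 2 + (π i - πs i) ^ 2 / r i +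
        2 * (((v' i - vs i) + (π' i - π i) / r i) * (π' i - πs i + r i * (v' i - v i))) =
        r i * (v' i - vs i) ^ 2 + (π' i - πs i) ^ 2 / r i +
        (r i * (v' i - v i) ^ 2 + (π' i - π i) ^ 2 / r i) +
        2 * ((π' i - πs i) * (v' i - vs i)) + 2 * ((π' i - π i) * (v' i - v i)) := by
      field_simp
      ring
    linarith
  linarith

variable [FiniteDimensional ℝ H]

/-- The error bound behind linear convergence: the distance of an iterate to the primal-dual
solution set is controlled by the decrease of the energy. -/
lemma exists_energy_le (hr : ∀ i, 0 < r i) {c : ℝ} (hc : 0 < c) (hq : ∀ w, c * ‖w‖ ^ 2 ≤ q w w)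
    {ws : H} {vs πs : ι → ℝ} (hs : IsKKT q B d g ws vs πs) :
    ∃ C : ℝ, 0 < C ∧ ∀ (v π v' π' : ι → ℝ) (w' : H), IsStep q B d r g v π w' v' π' →
      (∀ i, π' i ∈ subdiff (g i) (vs i)) → ∃ πb, IsKKT q B d g ws vs πb ∧
        energy r v' π' vs πb ≤ C * (energy r v' π' v π + 2 * q (w' - ws) (w' - ws)) := by
  let toC : (H →ₗ[ℝ] ℝ) ≃ₗ[ℝ] (H →L[ℝ] ℝ) := LinearMap.toContinuousLinearMap
  let Q : H →L[ℝ] H →L[ℝ] ℝ := LinearMap.toContinuousLinearMap (toC.toLinearMap ∘ₗ q)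
  let M₀ : (ι → ℝ) →ₗ[ℝ] H →ₗ[ℝ] ℝ := LinearMap.mk₂ ℝ (fun π h => ∑ i, B h i * π i)
    (fun a b h => by simp [mul_add, Finset.sum_add_distrib])
    (fun t a h => by simp only [Pi.smul_apply, smul_eq_mul, Finset.mul_sum]; congr! 1; ring)
    (fun a h k => by simp [add_mul, Finset.sum_add_distrib])
    (fun t a h => by simp only [map_smul, Pi.smul_apply, smul_eq_mul, Finset.mul_sum, mul_assoc])
  let M : (ι → ℝ) →L[ℝ] H →L[ℝ] ℝ := LinearMap.toContinuousLinearMap (toC.toLinearMap ∘ₗ M₀)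
  let R : (ι → ℝ) →L[ℝ] ι → ℝ := LinearMap.toContinuousLinearMap
    (LinearMap.pi fun i => r i • LinearMap.proj i)
  let S : (ι → ℝ) →L[ℝ] ι → ℝ := LinearMap.toContinuousLinearMap
    (LinearMap.pi fun i => (r i)⁻¹ • LinearMap.proj i)
  let B' : H →L[ℝ] ι → ℝ := LinearMap.toContinuousLinearMap B
  have hQ (x h) : Q x h = q x h := rfl
  have hM (x h) : M x h = ∑ i, B h i * x i := rfl
  have hR (x i) : R x i = r i * x i := rfl
  have hS (x i) : S x i = (r i)⁻¹ * x i := rfl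
  have hB' (x) : B' x = B x := rfl
  obtain ⟨κ, hκ0, hκ⟩ := exists_mem_uIcc_dist_le M
  obtain ⟨K, hK0, hK⟩ := exists_energy_equiv hr
  set N := 1 + 1 / c
  have hN0 : 0 < N := by positivity
  set C₁ := ‖B'‖ * N + ‖S‖ * K
  set C₂ := κ * (‖Q‖ * N + ‖M‖ * (‖R‖ * K))
  refine ⟨K * (C₁ ^ 2 + C₂ ^ 2) + 1, by positivity, fun v π v' π' w' h hbox => ?_⟩
  set D := energy r v' π' v π + 2 * q (w' - ws) (w' - ws)
  have hE := energy_nonneg hr v' π' v π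
  have hqw := hq (w' - ws)
  have hq0 : 0 ≤ q (w' - ws) (w' - ws) := le_trans (by positivity) hqw
  have hD0 : 0 ≤ D := by positivity
  have hED : √(energy r v' π' v π) ≤ √D := Real.sqrt_le_sqrt (by simp only [D]; linarith)
  have hω : ‖w' - ws‖ ≤ N * √D := by
    refine le_of_sq_le_sq ?_ (by positivity)
    rw [mul_pow, Real.sq_sqrt hD0]
    have h1 : ‖w' - ws‖ ^ 2 ≤ 1 / c * D := by
      have : c * ‖w' - ws‖ ^ 2 ≤ D := by simp only [D]; linarith
      field_simp
      linarith
    refine h1.trans (mul_le_mul_of_nonneg_right ?_ hD0)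
    have : 0 < 1 / c := by positivity
    simp only [N]
    nlinarith
  have hv : ‖v' - v‖ ≤ K * √D :=
    (hK v' π' v π).1.trans (mul_le_mul_of_nonneg_left hED hK0.le)
  have hp : ‖π' - π‖ ≤ K * √D :=
    (hK v' π' v π).2.1.trans (mul_le_mul_of_nonneg_left hED hK0.le)
  have he : ‖v' - vs‖ ≤ C₁ * √D := by
    have heq : v' - vs = B' (w' - ws) - S (π' - π) := by
      ext i
      have hri := (hr i).ne'
      rw [Pi.sub_apply, Pi.sub_apply, hS, hB', map_sub, Pi.sub_apply, Pi.sub_apply, hs.feas i,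
        h.dual i]
      field_simp
      ring
    calc ‖v' - vs‖ ≤ ‖B' (w' - ws)‖ + ‖S (π' - π)‖ := heq ▸ norm_sub_le _ _
      _ ≤ ‖B'‖ * (N * √D) + ‖S‖ * (K * √D) := by
        gcongr
        · exact B'.le_opNorm_of_le hω
        · exact S.le_opNorm_of_le hp
      _ = C₁ * √D := by simp only [C₁]; ring
  obtain ⟨πb, hπb, hMπ, hdist⟩ := hκ π' πs
  have hb : IsKKT q B d g ws vs πb := by
    refine ⟨hs.feas, fun x => ?_, fun i => ?_⟩
    · rw [← hM, hMπ, hM]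
      exact hs.stat x
    · rw [← Set.pi_univ_uIcc] at hπb
      exact (ordConnected_subdiff _ _).uIcc_subset (hbox i) (hs.sub i) (hπb i trivial)
  have hres : ‖M (πb - π')‖ ≤ (‖Q‖ * N + ‖M‖ * (‖R‖ * K)) * √D := by
    have heq : M (πb - π') = Q (w' - ws) + M (R (v' - v)) := by
      ext x
      have h1 := hs.stat_sub h x
      have h2 := hs.stat x
      have h3 : M πb x = M πs x := by rw [hMπ]
      simp only [_root_.add_apply, hQ, map_sub, _root_.sub_apply]
      simp only [map_sub, LinearMap.sub_apply] at h1
      rw [h3]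
      have h4 : ∑ i, B x i * (π' i - πs i + r i * (v' i - v i)) =
          M π' x - M πs x + (M (R v') x - M (R v) x) := by
        simp only [hM, hR]
        rw [← Finset.sum_sub_distrib, ← Finset.sum_sub_distrib, ← Finset.sum_add_distrib]
        exact Finset.sum_congr rfl fun i _ => by ring
      linarith
    calc ‖M (πb - π')‖ ≤ ‖Q (w' - ws)‖ + ‖M (R (v' - v))‖ := heq ▸ norm_add_le _ _
      _ ≤ ‖Q‖ * (N * √D) + ‖M‖ * (‖R‖ * (K * √D)) := by
        gcongr
        · exact Q.le_opNorm_of_le hω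
        · exact M.le_opNorm_of_le (R.le_opNorm_of_le hv)
      _ = _ := by ring
  have hd : ‖π' - πb‖ ≤ C₂ * √D := by
    rw [norm_sub_rev]
    refine hdist.trans ((mul_le_mul_of_nonneg_left hres hκ0).trans_eq ?_)
    simp only [C₂]
    ring
  refine ⟨πb, hb, (hK v' π' vs πb).2.2.trans ?_⟩
  have h1 : ‖v' - vs‖ ^ 2 ≤ C₁ ^ 2 * D := by
    rw [← Real.sq_sqrt hD0, ← mul_pow]
    exact pow_le_pow_left₀ (norm_nonneg _) he 2
  have h2 : ‖π' - πb‖ ^ 2 ≤ C₂ ^ 2 * D := by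
    rw [← Real.sq_sqrt hD0, ← mul_pow]
    exact pow_le_pow_left₀ (norm_nonneg _) hd 2
  have h3 := mul_le_mul_of_nonneg_left (add_le_add h1 h2) hK0.le
  linarith

/-- Linear convergence of the ADMM once the multipliers lie in the subdifferential at the
solution. -/
lemma exists_linear_rate_of_mem (hr : ∀ i, 0 < r i) {c : ℝ} (hc : 0 < c)
    (hq : ∀ w, c * ‖w‖ ^ 2 ≤ q w w) {ws : H} {vs πs : ι → ℝ} (hs : IsKKT q B d g ws vs πs)
    {w : ℕ → H} {v π : ℕ → ι → ℝ}
    (hstep : ∀ k, IsStep q B d r g (v k) (π k) (w (k + 1)) (v (k + 1)) (π (k + 1)))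
    (hsub : ∀ k i, π k i ∈ subdiff (g i) (v k i)) (hbox : ∀ k i, π k i ∈ subdiff (g i) (vs i)) :
    ∃ (πb : ι → ℝ) (C ρ : ℝ), IsKKT q B d g ws vs πb ∧ 0 < ρ ∧ ρ < 1 ∧ ∀ k,
      ‖w (k + 1) - ws‖ ≤ C * ρ ^ k ∧ ‖v k - vs‖ ≤ C * ρ ^ k ∧ ‖π k - πb‖ ≤ C * ρ ^ k := by
  obtain ⟨C, hC, hCE⟩ := exists_energy_le hr hc hq hs
  obtain ⟨K, hK0, hK⟩ := exists_energy_equiv hr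
  set D : ℕ → ℝ := fun k => energy r (v (k + 1)) (π (k + 1)) (v k) (π k) +
    2 * q (w (k + 1) - ws) (w (k + 1) - ws)
  set θ := C / (1 + C)
  have hθ0 : 0 < θ := by positivity
  have hθ1 : θ < 1 := by rw [div_lt_one (by positivity)]; linarith
  set E₀ := energy r (v 0) (π 0) vs πs
  have hE₀ : 0 ≤ E₀ := energy_nonneg hr _ _ _ _
  have hdecay (k : ℕ) : ∃ πb, IsKKT q B d g ws vs πb ∧
      energy r (v k) (π k) vs πb ≤ θ ^ k * E₀ := by
    induction k with
    | zero => exact ⟨πs, hs, by simp [E₀]⟩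
    | succ k ih =>
      obtain ⟨πb, hb, hle⟩ := ih
      have h1 := (hstep k).energy_add_le hr hb (hsub k)
      obtain ⟨πc, hc', hle'⟩ := hCE _ _ _ _ _ (hstep k) (hbox (k + 1))
      have hX : 0 ≤ θ ^ k * E₀ := by positivity
      have hCθ : C * (1 - θ) = θ := by simp only [θ]; field_simp; ring
      rcases le_total (D k) ((1 - θ) * (θ ^ k * E₀)) with h | h
      · refine ⟨πc, hc', hle'.trans ((mul_le_mul_of_nonneg_left h hC.le).trans_eq ?_)⟩
        rw [← mul_assoc, hCθ, pow_succ]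
        ring
      · refine ⟨πb, hb, ?_⟩
        simp only [D] at h
        rw [pow_succ]
        linarith
  choose P hP hPE using hdecay
  have hq0 (x : H) : 0 ≤ q x x := le_trans (by positivity) (hq x)
  have hDk (k : ℕ) : D k ≤ θ ^ k * E₀ := by
    have h1 := (hstep k).energy_add_le hr (hP k) (hsub k)
    have h2 := energy_nonneg hr (v (k + 1)) (π (k + 1)) vs (P k)
    have h3 := hPE k
    simp only [D]
    linarith
  set ρ := √θ
  have hρ0 : 0 < ρ := Real.sqrt_pos.2 hθ0
  have hρ1 : ρ < 1 := by rw [← Real.sqrt_one]; exact Real.sqrt_lt_sqrt hθ0.le hθ1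
  have hroot {x : ℝ} {k : ℕ} (hx : x ≤ θ ^ k * E₀) : √x ≤ √E₀ * ρ ^ k := by
    refine (Real.sqrt_le_sqrt hx).trans_eq ?_
    rw [Real.sqrt_mul (by positivity), mul_comm]
    congr 1
    rw [Real.sqrt_eq_iff_mul_self_eq (by positivity) (by positivity), ← mul_pow,
      Real.mul_self_sqrt hθ0.le]
  have hv (k : ℕ) : ‖v k - vs‖ ≤ K * √E₀ * ρ ^ k := by
    rw [mul_assoc]
    exact (hK _ _ _ _).1.trans (mul_le_mul_of_nonneg_left (hroot (hPE k)) hK0.le)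
  have hw (k : ℕ) : ‖w (k + 1) - ws‖ ≤ √(1 / c) * √E₀ * ρ ^ k := by
    have h1 : ‖w (k + 1) - ws‖ ^ 2 ≤ 1 / c * D k := by
      have h1 := hq (w (k + 1) - ws)
      have h2 := energy_nonneg hr (v (k + 1)) (π (k + 1)) (v k) (π k)
      have h3 := hq0 (w (k + 1) - ws)
      have : c * ‖w (k + 1) - ws‖ ^ 2 ≤ D k := by simp only [D]; linarith
      field_simp
      linarith
    calc ‖w (k + 1) - ws‖ ≤ √(1 / c * D k) := Real.le_sqrt_of_sq_le h1
      _ = √(1 / c) * √(D k) := Real.sqrt_mul (by positivity) _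
      _ ≤ √(1 / c) * (√E₀ * ρ ^ k) := by gcongr; exact hroot (hDk k)
      _ = _ := by ring
  have hstepπ (k : ℕ) : dist (π k) (π (k + 1)) ≤ K * √E₀ * ρ ^ k := by
    rw [dist_comm, dist_eq_norm, mul_assoc]
    refine (hK (v (k + 1)) _ (v k) _).2.1.trans (mul_le_mul_of_nonneg_left (hroot ?_) hK0.le)
    have h1 := hDk k
    have h2 := hq0 (w (k + 1) - ws)
    simp only [D] at h1
    linarith
  obtain ⟨πb, hlim⟩ := cauchySeq_tendsto_of_complete (cauchySeq_of_le_geometric _ _ hρ1 hstepπ)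
  have hpow : Tendsto (fun k => K * √E₀ * ρ ^ k) atTop (𝓝 0) := by
    simpa using (tendsto_pow_atTop_nhds_zero_of_lt_one hρ0.le hρ1).const_mul (K * √E₀)
  have hPlim : Tendsto P atTop (𝓝 πb) := by
    have h0 : Tendsto (fun k => π k - P k) atTop (𝓝 0) := by
      refine squeeze_zero_norm (fun k => ?_) hpow
      rw [mul_assoc]
      exact (hK _ _ _ _).2.1.trans (mul_le_mul_of_nonneg_left (hroot (hPE k)) hK0.le)
    simpa using hlim.sub h0
  have hb : IsKKT q B d g ws vs πb := by
    refine ⟨hs.feas, fun x => ?_, fun i => ?_⟩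
    · have h1 : Continuous fun π : ι → ℝ => q ws x + ∑ i, B x i * π i := by fun_prop
      refine tendsto_nhds_unique ((h1.tendsto πb).comp hPlim) ?_
      exact tendsto_const_nhds.congr fun k => ((hP k).stat x).symm
    · exact (isClosed_subdiff _ _).mem_of_tendsto (tendsto_pi_nhds.1 hPlim i)
        (Eventually.of_forall fun k => (hP k).sub i)
  set C₁ := √(1 / c) * √E₀
  set C₂ := K * √E₀
  set C₃ := C₂ / (1 - ρ)
  have hρ' : 0 < 1 - ρ := by linarith
  have h₁ : 0 ≤ C₁ := by positivity
  have h₂ : 0 ≤ C₂ := by positivity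
  have h₃ : 0 ≤ C₃ := by positivity
  refine ⟨πb, C₁ + C₂ + C₃, ρ, hb, hρ0, hρ1, fun k => ⟨(hw k).trans ?_, (hv k).trans ?_, ?_⟩⟩
  · gcongr; linarith
  · gcongr; linarith
  · rw [← dist_eq_norm]
    refine (dist_le_of_le_geometric_of_tendsto _ _ hρ1 hstepπ hlim k).trans ?_
    rw [mul_div_right_comm]
    gcongr
    linarith

/-- Linear convergence of the ADMM for a coercive quadratic plus a separable function whose
subdifferential is locally maximal. -/
theorem exists_linear_rate (hr : ∀ i, 0 < r i) {c : ℝ} (hc : 0 < c)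
    (hq : ∀ w, c * ‖w‖ ^ 2 ≤ q w w)
    (hg : ∀ i x, ∀ᶠ z in 𝓝 x, subdiff (g i) z ⊆ subdiff (g i) x)
    {ws : H} {vs πs : ι → ℝ} (hs : IsKKT q B d g ws vs πs)
    {w : ℕ → H} {v π : ℕ → ι → ℝ}
    (hstep : ∀ k, IsStep q B d r g (v k) (π k) (w (k + 1)) (v (k + 1)) (π (k + 1))) :
    ∃ (πb : ι → ℝ) (C ρ : ℝ) (N : ℕ), IsKKT q B d g ws vs πb ∧ 0 < ρ ∧ ρ < 1 ∧ ∀ k,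
      ‖w (N + k) - ws‖ ≤ C * ρ ^ k ∧ ‖v (N + k) - vs‖ ≤ C * ρ ^ k ∧
        ‖π (N + k) - πb‖ ≤ C * ρ ^ k := by
  obtain ⟨K, hK0, hK⟩ := exists_energy_equiv hr
  have hq0 (x : H) : 0 ≤ q x x := le_trans (by positivity) (hq x)
  set D : ℕ → ℝ := fun k => energy r (v (k + 2)) (π (k + 2)) (v (k + 1)) (π (k + 1)) +
    2 * q (w (k + 2) - ws) (w (k + 2) - ws)
  have hD0 (k : ℕ) : 0 ≤ D k :=
    add_nonneg (energy_nonneg hr _ _ _ _) (by linarith [hq0 (w (k + 2) - ws)])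
  have hle (k : ℕ) : energy r (v (k + 2)) (π (k + 2)) vs πs + D k ≤
      energy r (v (k + 1)) (π (k + 1)) vs πs :=
    (hstep (k + 1)).energy_add_le hr hs (hstep k).sub
  have hsum : Summable D := by
    refine summable_of_sum_range_le (c := energy r (v 1) (π 1) vs πs) hD0 fun n => ?_
    have : ∑ k ∈ Finset.range n, D k + energy r (v (n + 1)) (π (n + 1)) vs πs ≤
        energy r (v 1) (π 1) vs πs := by
      induction n with
      | zero => simp
      | succ n ih =>
        rw [Finset.sum_range_succ]
        have := hle n
        linarith
    linarith [energy_nonneg hr (v (n + 1)) (π (n + 1)) vs πs]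
  have hDlim := hsum.tendsto_atTop_zero
  have hsq : Tendsto (fun k => √(D k)) atTop (𝓝 0) := by
    simpa [Function.comp_def] using (Real.continuous_sqrt.tendsto 0).comp hDlim
  have hw : Tendsto (fun k => w (k + 2)) atTop (𝓝 ws) := by
    have h0 : Tendsto (fun k => w (k + 2) - ws) atTop (𝓝 0) := by
      refine squeeze_zero_norm (a := fun k => √(1 / c) * √(D k)) (fun k => ?_)
        (by simpa using hsq.const_mul √(1 / c))
      rw [← Real.sqrt_mul (by positivity)]
      refine Real.le_sqrt_of_sq_le ?_
      have h1 := hq (w (k + 2) - ws)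
      have h2 := energy_nonneg hr (v (k + 2)) (π (k + 2)) (v (k + 1)) (π (k + 1))
      have h3 := hq0 (w (k + 2) - ws)
      have : c * ‖w (k + 2) - ws‖ ^ 2 ≤ D k := by simp only [D]; linarith
      field_simp
      linarith
    simpa using h0.add_const ws
  have hp : Tendsto (fun k => π (k + 2) - π (k + 1)) atTop (𝓝 0) := by
    refine squeeze_zero_norm (a := fun k => K * √(D k)) (fun k => ?_)
      (by simpa using hsq.const_mul K)
    refine (hK (v (k + 2)) _ (v (k + 1)) _).2.1.trans ?_
    gcongr
    have h3 := hq0 (w (k + 2) - ws)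
    simp only [D]
    linarith
  have hv (i : ι) : Tendsto (fun k => v (k + 2) i) atTop (𝓝 (vs i)) := by
    have hBc : Continuous B := B.continuous_of_finiteDimensional
    have h1 := tendsto_pi_nhds.1 ((hBc.tendsto ws).comp hw) i
    have h2 := (tendsto_pi_nhds.1 hp i).const_mul (r i)⁻¹
    have h3 := (h1.add_const (d i)).sub h2
    rw [Pi.zero_apply, mul_zero, sub_zero, ← hs.feas i] at h3
    refine h3.congr fun k => ?_
    have hri := (hr i).ne'
    have h4 := (hstep (k + 1)).dual i
    simp only [Function.comp_apply, Pi.sub_apply]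
    rw [h4]
    field_simp
    ring
  have hev : ∀ᶠ k in atTop, ∀ i, π (k + 2) i ∈ subdiff (g i) (vs i) := by
    refine eventually_all.2 fun i => ?_
    filter_upwards [(hv i).eventually (hg i (vs i))] with k hk
    exact hk ((hstep (k + 1)).sub i)
  obtain ⟨N, hN⟩ := eventually_atTop.1 hev
  obtain ⟨πb, C, ρ, hb, hρ0, hρ1, hrate⟩ := exists_linear_rate_of_mem hr hc hq hs
    (w := fun k => w (N + 2 + k)) (v := fun k => v (N + 2 + k)) (π := fun k => π (N + 2 + k))
    (fun k => hstep (N + 2 + k)) (fun k i => by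
      have := (hstep (N + 1 + k)).sub i
      rwa [show N + 1 + k + 1 = N + 2 + k by ring] at this)
    (fun k i => by
      have := hN (N + k) (by omega) i
      rwa [show N + k + 2 = N + 2 + k by ring] at this)
  have hC : 0 ≤ C := by
    have := (norm_nonneg _).trans (hrate 0).1
    simpa using this
  refine ⟨πb, C, ρ, N + 3, hb, hρ0, hρ1, fun k => ?_⟩
  have h1 := hrate k
  have h2 := hrate (k + 1)
  have h3 : C * ρ ^ (k + 1) ≤ C * ρ ^ k :=
    mul_le_mul_of_nonneg_left (pow_le_pow_of_le_one hρ0.le hρ1.le (Nat.le_succ k)) hC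
  have h4 : N + 3 + k = N + 2 + (k + 1) := by ring
  rw [h4]
  exact ⟨h1.1, h2.2.1.trans h3, h2.2.2.trans h3⟩

end ADMM

section FirstOrder

variable {ι H : Type*} [Fintype ι] [NormedAddCommGroup H] [NormedSpace ℝ H]

/-- The augmented Lagrangian of `min q(w, w) / 2 + ∑ i, g i (v i)` subject to `v = B w + d`, with
penalty weights `r`. -/
noncomputable def augLagrangian (q : H →ₗ[ℝ] H →ₗ[ℝ] ℝ) (B : H →ₗ[ℝ] ι → ℝ) (d r : ι → ℝ)
    (g : ι → ℝ → ℝ) (w : H) (v π : ι → ℝ) : ℝ :=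
  q w w / 2 +
    ∑ i, (g i (v i) + π i * (B w i + d i - v i) + r i / 2 * (B w i + d i - v i) ^ 2)

lemma nonneg_of_forall_quadratic {a b : ℝ} (h : ∀ t, 0 < t → t ≤ 1 → 0 ≤ a * t + b * t ^ 2) :
    0 ≤ a := by
  have hlim : Tendsto (fun t : ℝ => a + b * t) (𝓝[>] 0) (𝓝 (a + b * 0)) :=
    (Continuous.tendsto (by fun_prop) 0).mono_left nhdsWithin_le_nhds
  rw [mul_zero, add_zero] at hlim
  refine ge_of_tendsto hlim ?_
  filter_upwards [Ioc_mem_nhdsGT (zero_lt_one (α := ℝ))] with t ht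
  have := h t ht.1 ht.2
  exact nonneg_of_mul_nonneg_right (a := t) (by linarith) ht.1

variable {q : H →ₗ[ℝ] H →ₗ[ℝ] ℝ} {B : H →ₗ[ℝ] ι → ℝ} {d r : ι → ℝ} {g : ι → ℝ → ℝ}

lemma augLagrangian_stationary (hsymm : ∀ x y, q x y = q y x) {w : H} {v π : ι → ℝ}
    (hmin : ∀ w', augLagrangian q B d r g w v π ≤ augLagrangian q B d r g w' v π) (h : H) :
    q w h + ∑ i, B h i * (π i + r i * (B w i + d i - v i)) = 0 := by
  have hnn (h : H) : 0 ≤ q w h + ∑ i, B h i * (π i + r i * (B w i + d i - v i)) := by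
    refine nonneg_of_forall_quadratic (b := q h h / 2 + ∑ i, r i / 2 * B h i ^ 2)
      fun t _ _ => ?_
    have h1 := hmin (w + t • h)
    have h2 : augLagrangian q B d r g (w + t • h) v π = augLagrangian q B d r g w v π +
        ((q w h + ∑ i, B h i * (π i + r i * (B w i + d i - v i))) * t +
          (q h h / 2 + ∑ i, r i / 2 * B h i ^ 2) * t ^ 2) := by
      simp only [augLagrangian, map_add, map_smul, LinearMap.add_apply, LinearMap.smul_apply,
        Pi.add_apply, Pi.smul_apply, smul_eq_mul, hsymm h w]
      have h3 : ∑ i, (g i (v i) + π i * (B w i + t * B h i + d i - v i) +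
            r i / 2 * (B w i + t * B h i + d i - v i) ^ 2) =
          ∑ i, (g i (v i) + π i * (B w i + d i - v i) + r i / 2 * (B w i + d i - v i) ^ 2) +
          (∑ i, B h i * (π i + r i * (B w i + d i - v i))) * t +
          (∑ i, r i / 2 * B h i ^ 2) * t ^ 2 := by
        rw [Finset.sum_mul, Finset.sum_mul, ← Finset.sum_add_distrib, ← Finset.sum_add_distrib]
        exact Finset.sum_congr rfl fun i _ => by ring
      rw [h3]
      ring
    linarith
  refine le_antisymm ?_ (hnn h)
  have := hnn (-h)
  simp only [map_neg, Pi.neg_apply, neg_mul, Finset.sum_neg_distrib] at this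
  linarith

lemma mem_subdiff_of_isMin_augLagrangian (hg : ∀ i, ConvexOn ℝ Set.univ (g i)) {w : H}
    {v π : ι → ℝ}
    (hmin : ∀ v', augLagrangian q B d r g w v π ≤ augLagrangian q B d r g w v' π) (i : ι) :
    π i + r i * (B w i + d i - v i) ∈ subdiff (g i) (v i) := by
  classical
  intro y
  have hone (z : ℝ) : g i (v i) + π i * (B w i + d i - v i) + r i / 2 * (B w i + d i - v i) ^ 2 ≤
      g i z + π i * (B w i + d i - z) + r i / 2 * (B w i + d i - z) ^ 2 := by
    have h1 := hmin (Function.update v i z)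
    simp only [augLagrangian] at h1
    have h2 := le_of_add_le_add_left h1
    rw [← Finset.add_sum_erase _ _ (Finset.mem_univ i),
      ← Finset.add_sum_erase _ _ (Finset.mem_univ i)] at h2
    have h3 : ∑ k ∈ Finset.univ.erase i, (g k (Function.update v i z k) +
          π k * (B w k + d k - Function.update v i z k) +
          r k / 2 * (B w k + d k - Function.update v i z k) ^ 2) =
        ∑ k ∈ Finset.univ.erase i,
          (g k (v k) + π k * (B w k + d k - v k) + r k / 2 * (B w k + d k - v k) ^ 2) :=
      Finset.sum_congr rfl fun k hk => by
        rw [Function.update_of_ne (Finset.ne_of_mem_erase hk)]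
    rw [h3, Function.update_self] at h2
    exact le_of_add_le_add_right h2
  suffices 0 ≤ g i y - g i (v i) - (π i + r i * (B w i + d i - v i)) * (y - v i) by linarith
  refine nonneg_of_forall_quadratic (b := r i / 2 * (y - v i) ^ 2) fun t ht0 ht1 => ?_
  have h1 := hone (v i + t * (y - v i))
  have h2 := (hg i).2 (Set.mem_univ (v i)) (Set.mem_univ y) (sub_nonneg.2 ht1) ht0.le (by ring)
  simp only [smul_eq_mul] at h2
  rw [show (1 - t) * v i + t * y = v i + t * (y - v i) by ring] at h2
  linarith

lemma IsStep.of_isMin (hsymm : ∀ x y, q x y = q y x) (hg : ∀ i, ConvexOn ℝ Set.univ (g i))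
    {v π v' π' : ι → ℝ} {w' : H}
    (hw : ∀ w, augLagrangian q B d r g w' v π ≤ augLagrangian q B d r g w v π)
    (hv : ∀ u, augLagrangian q B d r g w' v' π ≤ augLagrangian q B d r g w' u π)
    (hπ : ∀ i, π' i = π i + r i * (B w' i + d i - v' i)) : IsStep q B d r g v π w' v' π' where
  stat h := by
    rw [← augLagrangian_stationary hsymm hw h]
    congr 1
    exact Finset.sum_congr rfl fun i _ => by rw [hπ i]; ring
  sub i := hπ i ▸ mem_subdiff_of_isMin_augLagrangian hg hv i
  dual := hπ

lemma IsKKT.of_isMin (hsymm : ∀ x y, q x y = q y x) (hg : ∀ i, ConvexOn ℝ Set.univ (g i))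
    {w : H} {v π : ι → ℝ} (hfeas : ∀ i, v i = B w i + d i)
    (hmin : ∀ w' v', augLagrangian q B d 0 g w v π ≤ augLagrangian q B d 0 g w' v' π) :
    IsKKT q B d g w v π where
  feas := hfeas
  stat h := by simpa using augLagrangian_stationary hsymm (fun w' => hmin w' v) h
  sub i := by simpa using mem_subdiff_of_isMin_augLagrangian hg (hmin w) i

lemma IsKKT.isMin (hsymm : ∀ x y, q x y = q y x) (hq : ∀ x, 0 ≤ q x x)
    {w : H} {v π : ι → ℝ} (h : IsKKT q B d g w v π) (w' : H) (v' : ι → ℝ) :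
    augLagrangian q B d 0 g w v π ≤ augLagrangian q B d 0 g w' v' π := by
  have h1 := h.stat (w' - w)
  have h2 := hq (w' - w)
  simp only [map_sub, LinearMap.sub_apply, Pi.sub_apply, hsymm w' w] at h1 h2
  have h3 : ∑ i, (g i (v i) + π i * (B w i + d i - v i)) + ∑ i, (B w' i - B w i) * π i ≤
      ∑ i, (g i (v' i) + π i * (B w' i + d i - v' i)) := by
    rw [← Finset.sum_add_distrib]
    refine Finset.sum_le_sum fun i _ => ?_
    have := h.sub i (v' i)
    linarith
  simp only [augLagrangian, Pi.zero_apply, zero_div, zero_mul, add_zero]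
  linarith

end FirstOrder

/-- A nonnegative sequence with geometric decay from some index on decays geometrically. -/
lemma exists_geometric_bound {x : ℕ → ℝ} (hx : ∀ k, 0 ≤ x k) {C ρ : ℝ} (hρ : 0 < ρ) {N : ℕ}
    (h : ∀ k, x (N + k) ≤ C * ρ ^ k) : ∃ C' : ℝ, 0 < C' ∧ ∀ k, x k ≤ C' * ρ ^ k := by
  have hS : 0 ≤ ∑ j ∈ Finset.range N, x j / ρ ^ j :=
    Finset.sum_nonneg fun j _ => div_nonneg (hx j) (by positivity)
  have hC : 0 ≤ C := by simpa using (hx _).trans (h 0)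
  have hCN : 0 ≤ C / ρ ^ N := by positivity
  refine ⟨∑ j ∈ Finset.range N, x j / ρ ^ j + C / ρ ^ N + 1, by positivity, fun k => ?_⟩
  rcases lt_or_ge k N with hk | hk
  · have h1 : x k / ρ ^ k ≤ ∑ j ∈ Finset.range N, x j / ρ ^ j :=
      Finset.single_le_sum (f := fun j => x j / ρ ^ j)
        (fun j _ => div_nonneg (hx j) (by positivity)) (Finset.mem_range.2 hk)
    rw [← div_le_iff₀ (by positivity)]
    linarith
  · obtain ⟨j, rfl⟩ := Nat.exists_eq_add_of_le hk
    calc x (N + j) ≤ C * ρ ^ j := h j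
      _ = C / ρ ^ N * ρ ^ (N + j) := by rw [pow_add]; field_simp
      _ ≤ _ := by gcongr; linarith

lemma sum_sq_le_card_mul_norm_sq {ι : Type*} [Fintype ι] (x : ι → ℝ) :
    ∑ i, x i ^ 2 ≤ Fintype.card ι * ‖x‖ ^ 2 := by
  refine (Finset.sum_le_sum (g := fun _ => ‖x‖ ^ 2) fun i _ => ?_).trans_eq (by simp)
  rw [← sq_abs]
  exact pow_le_pow_left₀ (abs_nonneg _) (norm_le_pi_norm x i) 2

section ElasticNet

/-- Two matrices with the same number of columns as one vector. -/
def packMatrices {m₁ m₂ l : Type*} (M : Matrix m₁ l ℝ) (N : Matrix m₂ l ℝ) :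
    (m₁ × l) ⊕ (m₂ × l) → ℝ :=
  Sum.elim (fun ij => M ij.1 ij.2) (fun ij => N ij.1 ij.2)

/-- A matrix and a vector as one vector. -/
def packMatrixVec {m l : Type*} (M : Matrix m l ℝ) (b : l → ℝ) : (m × l) ⊕ l → ℝ :=
  Sum.elim (fun ij => M ij.1 ij.2) b

variable {n p J : ℕ}

/-- The pairs `(W, b)` whose rows sum to zero. -/
def sumZero (p J : ℕ) : Submodule ℝ ((Fin p × Fin J) ⊕ Fin J → ℝ) where
  carrier := {x | (∀ g, ∑ j, x (Sum.inl (g, j)) = 0) ∧ ∑ j, x (Sum.inr j) = 0}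
  add_mem' hx hy := by
    simp_all [Finset.sum_add_distrib]
  zero_mem' := by simp
  smul_mem' t x hx := by
    simp only [Set.mem_ofPred_eq] at hx
    simp [← Finset.mul_sum, hx]

/-- The bilinear form of the ridge penalty `λ₂ ‖W‖² + λ₃ ‖b‖²`. -/
def ridgeForm (p J : ℕ) (lam2 lam3 : ℝ) : sumZero p J →ₗ[ℝ] sumZero p J →ₗ[ℝ] ℝ :=
  LinearMap.mk₂ ℝ (fun x y => lam2 * (∑ ij, x.1 (Sum.inl ij) * y.1 (Sum.inl ij)) +
      lam3 * ∑ j, x.1 (Sum.inr j) * y.1 (Sum.inr j))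
    (fun x y z => by simp [add_mul, Finset.sum_add_distrib]; ring)
    (fun t x y => by simp [mul_assoc, ← Finset.mul_sum]; ring)
    (fun x y z => by simp [mul_add, Finset.sum_add_distrib]; ring)
    (fun t x y => by simp [mul_left_comm _ t, ← Finset.mul_sum]; ring)

/-- The linear part `(W, b) ↦ (Xᵀ W + e bᵀ, W)` of the constraints. -/
def constraintMap (X : Matrix (Fin p) (Fin n) ℝ) (J : ℕ) :
    sumZero p J →ₗ[ℝ] (Fin n × Fin J) ⊕ (Fin p × Fin J) → ℝ where
  toFun x := Sum.elim (fun ij => ∑ g, X g ij.1 * x.1 (Sum.inl (g, ij.2)) + x.1 (Sum.inr ij.2))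
    (fun gj => x.1 (Sum.inl gj))
  map_add' x y := by
    ext (ij | gj)
    · simp [mul_add, Finset.sum_add_distrib]; ring
    · simp
  map_smul' t x := by
    ext (ij | gj)
    · simp [mul_left_comm _ t, ← Finset.mul_sum]; ring
    · simp

lemma ridgeForm_symm (lam2 lam3 : ℝ) (x y : sumZero p J) :
    ridgeForm p J lam2 lam3 x y = ridgeForm p J lam2 lam3 y x := by
  simp [ridgeForm, mul_comm]

lemma ridgeForm_coercive {lam2 lam3 : ℝ} (h2 : 0 < lam2) (h3 : 0 < lam3) (x : sumZero p J) :
    min lam2 lam3 * ‖x‖ ^ 2 ≤ ridgeForm p J lam2 lam3 x x := by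
  have hc : 0 < min lam2 lam3 := lt_min h2 h3
  have h1 : ‖x‖ ^ 2 ≤ ∑ k, x.1 k ^ 2 := by
    have hs : 0 ≤ ∑ k, x.1 k ^ 2 := Finset.sum_nonneg fun k _ => sq_nonneg _
    rw [← Real.sq_sqrt hs]
    refine pow_le_pow_left₀ (norm_nonneg _) ?_ 2
    refine (pi_norm_le_iff_of_nonneg (Real.sqrt_nonneg _)).2 fun k => Real.le_sqrt_of_sq_le ?_
    rw [Real.norm_eq_abs, sq_abs]
    exact Finset.single_le_sum (f := fun k => x.1 k ^ 2) (fun k _ => sq_nonneg _)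
      (Finset.mem_univ k)
  refine (mul_le_mul_of_nonneg_left h1 hc.le).trans ?_
  rw [Fintype.sum_sum_type, mul_add]
  simp only [ridgeForm, LinearMap.mk₂_apply, ← sq]
  have hs1 : 0 ≤ ∑ ij, x.1 (Sum.inl ij) ^ 2 := Finset.sum_nonneg fun k _ => sq_nonneg _
  have hs2 : 0 ≤ ∑ j, x.1 (Sum.inr j) ^ 2 := Finset.sum_nonneg fun k _ => sq_nonneg _
  exact add_le_add (mul_le_mul_of_nonneg_right (min_le_left _ _) hs1)
    (mul_le_mul_of_nonneg_right (min_le_right _ _) hs2)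

/-- The nonsmooth part of the elastic-net objective: the weighted hinge terms of `A` and the
`ℓ¹` terms of `U`. -/
def elasticNetTerm (p : ℕ) (a : Fin n → Fin J → ℝ) (lam1 : ℝ) :
    (Fin n × Fin J) ⊕ (Fin p × Fin J) → ℝ → ℝ :=
  Sum.elim (fun ij => hinge (a ij.1 ij.2) 0) (fun _ => hinge lam1 lam1)

lemma hinge_self (l x : ℝ) : hinge l l x = l * |x| := by
  rcases le_total 0 x with h | h
  · simp [hinge, h, abs_of_nonneg h]
  · simp [hinge, h, abs_of_nonpos h]

lemma augLagrangian_elasticNet (X : Matrix (Fin p) (Fin n) ℝ) (c : Fin n → Fin J → ℝ)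
    (s lam1 lam2 lam3 α μ : ℝ) (W : Matrix (Fin p) (Fin J) ℝ) (b : Fin J → ℝ)
    (h : packMatrixVec W b ∈ sumZero p J) (A : Matrix (Fin n) (Fin J) ℝ)
    (U : Matrix (Fin p) (Fin J) ℝ) (P : Matrix (Fin n) (Fin J) ℝ)
    (L : Matrix (Fin p) (Fin J) ℝ) :
    augLagrangian (ridgeForm p J lam2 lam3) (constraintMap X J) (Sum.elim 1 0)
      (Sum.elim (fun _ => α) (fun _ => μ)) (elasticNetTerm p (fun i j => s * c i j) lam1)
      ⟨packMatrixVec W b, h⟩ (packMatrices A U) (packMatrices P L) =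
    s * (∑ i, ∑ j, c i j * max (A i j) 0) + lam1 * (∑ g, ∑ j, |U g j|)
        + lam2 / 2 * (∑ g, ∑ j, (W g j) ^ 2) + lam3 / 2 * ∑ j, (b j) ^ 2
        + (∑ i, ∑ j, P i j * ((∑ g, X g i * W g j) + b j + 1 - A i j))
        + (∑ g, ∑ j, L g j * (W g j - U g j))
        + α / 2 * (∑ i, ∑ j, ((∑ g, X g i * W g j) + b j + 1 - A i j) ^ 2)
        + μ / 2 * (∑ g, ∑ j, (W g j - U g j) ^ 2) := by
  simp only [augLagrangian, ridgeForm, constraintMap, elasticNetTerm, packMatrices,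
    packMatrixVec, LinearMap.mk₂_apply, LinearMap.coe_mk, AddHom.coe_mk, Fintype.sum_sum_type,
    Fintype.sum_prod_type, Sum.elim_inl, Sum.elim_inr, hinge_self, Pi.one_apply, Pi.zero_apply,
    Finset.sum_add_distrib, Finset.mul_sum, add_zero]
  simp only [hinge, zero_mul, add_zero, mul_assoc, ← sq, add_div, Finset.sum_div]
  simp only [div_eq_mul_inv, mul_right_comm _ _ (2 : ℝ)⁻¹]
  ring_nf

end ElasticNet

/-- Linear convergence of the ADMM (4) for the elastic-net splitting (3) when
`λ₂ > 0` and `λ₃ > 0`: there exist a primal-dual optimal point (a saddle point of the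
Lagrangian) `z₁*`, a constant `C > 0` and a rate `ρ ∈ (0,1)` such that
`‖z₁^k − z₁*‖ ≤ C ρ^k` for all `k`. -/
theorem stmt_14 (n p J : ℕ) (X : Matrix (Fin p) (Fin n) ℝ) (y : Fin n → Fin J)
    (lam1 lam2 lam3 : ℝ) (hlam1 : 0 ≤ lam1) (hlam2 : 0 < lam2) (hlam3 : 0 < lam3)
    (α μ : ℝ) (hα : 0 < α) (hμ : 0 < μ)
    (Wseq : ℕ → Matrix (Fin p) (Fin J) ℝ) (bseq : ℕ → Fin J → ℝ)
    (Aseq : ℕ → Matrix (Fin n) (Fin J) ℝ) (Useq : ℕ → Matrix (Fin p) (Fin J) ℝ)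
    (Piseq : ℕ → Matrix (Fin n) (Fin J) ℝ) (Lamseq : ℕ → Matrix (Fin p) (Fin J) ℝ) :
    let c : Fin n → Fin J → ℝ := fun i j => if y i ≠ j then 1 else 0
    let feas : Matrix (Fin p) (Fin J) ℝ → (Fin J → ℝ) → Prop := fun W b =>
      (∀ g, ∑ j, W g j = 0) ∧ (∑ j, b j = 0)
    let Amap : Matrix (Fin p) (Fin J) ℝ → (Fin J → ℝ) → Matrix (Fin n) (Fin J) ℝ :=
      fun W b => Matrix.of fun i j => (∑ g, X g i * W g j) + b j + 1
    let F1 : Matrix (Fin p) (Fin J) ℝ → (Fin J → ℝ) → Matrix (Fin n) (Fin J) ℝ →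
        Matrix (Fin p) (Fin J) ℝ → ℝ := fun W b A U =>
      (1 / (n : ℝ)) * (∑ i, ∑ j, c i j * max (A i j) 0) + lam1 * (∑ g, ∑ j, |U g j|)
        + lam2 / 2 * (∑ g, ∑ j, (W g j) ^ 2) + lam3 / 2 * ∑ j, (b j) ^ 2
    let L0 : Matrix (Fin p) (Fin J) ℝ → (Fin J → ℝ) → Matrix (Fin n) (Fin J) ℝ →
        Matrix (Fin p) (Fin J) ℝ → Matrix (Fin n) (Fin J) ℝ →
        Matrix (Fin p) (Fin J) ℝ → ℝ := fun W b A U Pv Lv =>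
      F1 W b A U + (∑ i, ∑ j, Pv i j * (Amap W b i j - A i j))
        + (∑ g, ∑ j, Lv g j * (W g j - U g j))
    let L1 : Matrix (Fin p) (Fin J) ℝ → (Fin J → ℝ) → Matrix (Fin n) (Fin J) ℝ →
        Matrix (Fin p) (Fin J) ℝ → Matrix (Fin n) (Fin J) ℝ →
        Matrix (Fin p) (Fin J) ℝ → ℝ := fun W b A U Pv Lv =>
      L0 W b A U Pv Lv + α / 2 * (∑ i, ∑ j, (Amap W b i j - A i j) ^ 2)
        + μ / 2 * (∑ g, ∑ j, (W g j - U g j) ^ 2)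
    let saddle : Matrix (Fin p) (Fin J) ℝ → (Fin J → ℝ) → Matrix (Fin n) (Fin J) ℝ →
        Matrix (Fin p) (Fin J) ℝ → Matrix (Fin n) (Fin J) ℝ →
        Matrix (Fin p) (Fin J) ℝ → Prop := fun W b A U Pv Lv =>
      feas W b ∧ A = Amap W b ∧ U = W ∧
      (∀ Pv' Lv', L0 W b A U Pv' Lv' ≤ L0 W b A U Pv Lv) ∧
      (∀ W' b' A' U', feas W' b' → L0 W b A U Pv Lv ≤ L0 W' b' A' U' Pv Lv)
    -- the Lagrangian has a saddle point
    (∃ Ws bs As Us Pis Lams, saddle Ws bs As Us Pis Lams) →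
    -- ADMM updates (4a)-(4d)
    (∀ k, feas (Wseq (k + 1)) (bseq (k + 1)) ∧
      ∀ W b, feas W b →
        L1 (Wseq (k + 1)) (bseq (k + 1)) (Aseq k) (Useq k) (Piseq k) (Lamseq k)
          ≤ L1 W b (Aseq k) (Useq k) (Piseq k) (Lamseq k)) →
    (∀ k A U,
      L1 (Wseq (k + 1)) (bseq (k + 1)) (Aseq (k + 1)) (Useq (k + 1)) (Piseq k) (Lamseq k)
        ≤ L1 (Wseq (k + 1)) (bseq (k + 1)) A U (Piseq k) (Lamseq k)) →
    (∀ k, Piseq (k + 1) = Matrix.of fun i j =>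
      Piseq k i j + α * (Amap (Wseq (k + 1)) (bseq (k + 1)) i j - Aseq (k + 1) i j)) →
    (∀ k, Lamseq (k + 1) = Matrix.of fun g j =>
      Lamseq k g j + μ * (Wseq (k + 1) g j - Useq (k + 1) g j)) →
    -- conclusion: linear convergence to a primal-dual optimal point
    (∃ (Ws : Matrix (Fin p) (Fin J) ℝ) (bs : Fin J → ℝ)
        (As : Matrix (Fin n) (Fin J) ℝ) (Us : Matrix (Fin p) (Fin J) ℝ)
        (Pis : Matrix (Fin n) (Fin J) ℝ) (Lams : Matrix (Fin p) (Fin J) ℝ)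
        (C ρ : ℝ),
      saddle Ws bs As Us Pis Lams ∧ 0 < C ∧ 0 < ρ ∧ ρ < 1 ∧
      ∀ k, Real.sqrt ((∑ g, ∑ j, (Wseq k g j - Ws g j) ^ 2)
          + (∑ j, (bseq k j - bs j) ^ 2)
          + (∑ i, ∑ j, (Aseq k i j - As i j) ^ 2)
          + (∑ g, ∑ j, (Useq k g j - Us g j) ^ 2)
          + (∑ i, ∑ j, (Piseq k i j - Pis i j) ^ 2)
          + (∑ g, ∑ j, (Lamseq k g j - Lams g j) ^ 2)) ≤ C * ρ ^ k) := by
  intro c feas Amap F1 L0 L1 saddle ⟨Ws, bs, As, Us, Pis, Lams, hfs, hAs, hUs, _, hmins⟩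
    hW hA hPi hLam
  set q := ridgeForm p J lam2 lam3
  set B := constraintMap X J
  set d : (Fin n × Fin J) ⊕ (Fin p × Fin J) → ℝ := Sum.elim 1 0
  set r : (Fin n × Fin J) ⊕ (Fin p × Fin J) → ℝ := Sum.elim (fun _ => α) (fun _ => μ)
  set g := elasticNetTerm p (fun i j => 1 / (n : ℝ) * c i j) lam1
  have hr : ∀ i, 0 < r i := by rintro (i | i) <;> simpa [r]
  have hL1 (W b) (h : packMatrixVec W b ∈ sumZero p J) (A U P L) :
      L1 W b A U P L = augLagrangian q B d r g ⟨packMatrixVec W b, h⟩ (packMatrices A U)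
        (packMatrices P L) :=
    (augLagrangian_elasticNet X c _ lam1 lam2 lam3 α μ W b h A U P L).symm
  have hL0 (W b) (h : packMatrixVec W b ∈ sumZero p J) (A U P L) :
      L0 W b A U P L = augLagrangian q B d 0 g ⟨packMatrixVec W b, h⟩ (packMatrices A U)
        (packMatrices P L) := by
    have h0 := augLagrangian_elasticNet X c (1 / (n : ℝ)) lam1 lam2 lam3 0 0 W b h A U P L
    rw [show (Sum.elim (fun _ => 0) (fun _ => 0) : (Fin n × Fin J) ⊕ (Fin p × Fin J) → ℝ) = 0 from
      Sum.elim_const_const 0] at h0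
    rw [h0]
    simp [L0, F1, Amap]
  have hsurjH (x : sumZero p J) : ∃ W b, ∃ h : packMatrixVec W b ∈ sumZero p J,
      x = ⟨packMatrixVec W b, h⟩ := by
    have hx : packMatrixVec (Matrix.of fun i j => x.1 (Sum.inl (i, j)))
        (fun j => x.1 (Sum.inr j)) = x.1 := by
      ext (k | k) <;> rfl
    exact ⟨_, _, hx ▸ x.2, Subtype.ext hx.symm⟩
  have hsurjV (v : (Fin n × Fin J) ⊕ (Fin p × Fin J) → ℝ) : ∃ A U, v = packMatrices A U :=
    ⟨Matrix.of fun i j => v (Sum.inl (i, j)), Matrix.of fun i j => v (Sum.inr (i, j)), by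
      ext (k | k) <;> rfl⟩
  have hsymm (x y) : q x y = q y x := ridgeForm_symm lam2 lam3 x y
  have hcoer (x) : min lam2 lam3 * ‖x‖ ^ 2 ≤ q x x := ridgeForm_coercive hlam2 hlam3 x
  have hs_mem : packMatrixVec Ws bs ∈ sumZero p J := hfs
  have hmem (k : ℕ) : packMatrixVec (Wseq (k + 1)) (bseq (k + 1)) ∈ sumZero p J := (hW k).1
  have hc0 : 0 < min lam2 lam3 := lt_min hlam2 hlam3
  have hq0 (x : sumZero p J) : 0 ≤ q x x := le_trans (by positivity) (hcoer x)
  have hconv : ∀ i, ConvexOn ℝ Set.univ (g i) := by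
    rintro (i | i)
    · refine hinge_convex (mul_nonneg (by positivity) ?_) le_rfl
      simp only [c]
      split_ifs <;> norm_num
    · exact hinge_convex hlam1 hlam1
  have hloc : ∀ i x, ∀ᶠ z in 𝓝 x, subdiff (g i) z ⊆ subdiff (g i) x := by
    rintro (i | i) x
    · exact eventually_subdiff_hinge_subset _ _ _
    · exact eventually_subdiff_hinge_subset _ _ _
  have hs : IsKKT q B d g ⟨packMatrixVec Ws bs, hs_mem⟩ (packMatrices As Us)
      (packMatrices Pis Lams) := by
    refine IsKKT.of_isMin hsymm hconv ?_ fun x v => ?_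
    · rintro (i | i)
      · rw [hAs]; rfl
      · rw [hUs]; exact (add_zero _).symm
    · obtain ⟨W, b, h, rfl⟩ := hsurjH x
      obtain ⟨A, U, rfl⟩ := hsurjV v
      rw [← hL0, ← hL0]
      exact hmins W b A U h
  have hstep (k : ℕ) : IsStep q B d r g (packMatrices (Aseq k) (Useq k))
      (packMatrices (Piseq k) (Lamseq k))
      ⟨packMatrixVec (Wseq (k + 1)) (bseq (k + 1)), hmem k⟩
      (packMatrices (Aseq (k + 1)) (Useq (k + 1)))
      (packMatrices (Piseq (k + 1)) (Lamseq (k + 1))) := by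
    refine IsStep.of_isMin hsymm hconv (fun x => ?_) (fun v => ?_) ?_
    · obtain ⟨W, b, h, rfl⟩ := hsurjH x
      rw [← hL1, ← hL1]
      exact (hW k).2 W b h
    · obtain ⟨A, U, rfl⟩ := hsurjV v
      rw [← hL1, ← hL1]
      exact hA k A U
    · rintro (i | i)
      · exact congrFun (congrFun (hPi k) i.1) i.2
      · refine (congrFun (congrFun (hLam k) i.1) i.2).trans ?_
        simp [packMatrices, r, d, B, constraintMap, packMatrixVec]
  obtain ⟨πb, C, ρ, N, hb, hρ0, hρ1, hrate⟩ := exists_linear_rate hr hc0 hcoer hloc hs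
    (w := fun k => ⟨packMatrixVec (Wseq (k + 1)) (bseq (k + 1)), hmem k⟩)
    (fun k => hstep (k + 1))
  obtain ⟨Pb, Lb, rfl⟩ := hsurjV πb
  have hC : 0 ≤ C := by simpa using (norm_nonneg _).trans (hrate 0).1
  obtain ⟨c₁, hc₁⟩ : ∃ c : ℝ, c = (Fintype.card ((Fin p × Fin J) ⊕ Fin J) : ℝ) := ⟨_, rfl⟩
  obtain ⟨c₂, hc₂⟩ : ∃ c : ℝ, c = (Fintype.card ((Fin n × Fin J) ⊕ (Fin p × Fin J)) : ℝ) :=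
    ⟨_, rfl⟩
  have hc₁0 : 0 ≤ c₁ := hc₁ ▸ Nat.cast_nonneg _
  have hc₂0 : 0 ≤ c₂ := hc₂ ▸ Nat.cast_nonneg _
  obtain ⟨C', hC', hbound⟩ := exists_geometric_bound (N := N + 1) (C := √(c₁ + c₂ + c₂) * C)
    (x := fun k => √((∑ g, ∑ j, (Wseq k g j - Ws g j) ^ 2)
          + (∑ j, (bseq k j - bs j) ^ 2)
          + (∑ i, ∑ j, (Aseq k i j - As i j) ^ 2)
          + (∑ g, ∑ j, (Useq k g j - Us g j) ^ 2)
          + (∑ i, ∑ j, (Piseq k i j - Pb i j) ^ 2)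
          + (∑ g, ∑ j, (Lamseq k g j - Lb g j) ^ 2))) (fun k => Real.sqrt_nonneg _) hρ0 (by
      intro k
      obtain ⟨h1, h2, h3⟩ := hrate k
      replace h1 : ‖packMatrixVec (Wseq (N + k + 1)) (bseq (N + k + 1)) - packMatrixVec Ws bs‖
          ≤ C * ρ ^ k := h1
      have hX := add_le_add (add_le_add
        ((sum_sq_le_card_mul_norm_sq _).trans (mul_le_mul_of_nonneg_left
          (pow_le_pow_left₀ (norm_nonneg _) h1 2) (Nat.cast_nonneg _)))
        ((sum_sq_le_card_mul_norm_sq _).trans (mul_le_mul_of_nonneg_left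
          (pow_le_pow_left₀ (norm_nonneg _) h2 2) (Nat.cast_nonneg _))))
        ((sum_sq_le_card_mul_norm_sq _).trans (mul_le_mul_of_nonneg_left
          (pow_le_pow_left₀ (norm_nonneg _) h3 2) (Nat.cast_nonneg _)))
      rw [← hc₁, ← hc₂] at hX
      rw [mul_assoc, ← Real.sqrt_sq (show 0 ≤ C * ρ ^ k by positivity),
        ← Real.sqrt_mul (by positivity)]
      refine Real.sqrt_le_sqrt ((le_of_eq ?_).trans (hX.trans_eq ?_))
      · simp only [packMatrixVec, packMatrices, Pi.sub_apply,
          Fintype.sum_sum_type, Fintype.sum_prod_type, Sum.elim_inl, Sum.elim_inr,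
          show N + 1 + k = N + k + 1 by ring]
        ring
      · ring)
  refine ⟨Ws, bs, As, Us, Pb, Lb, C', ρ, ⟨hfs, hAs, hUs, fun P L => ?_, fun W b A U h => ?_⟩,
    hC', hρ0, hρ1, hbound⟩
  · simp [L0, hAs, hUs]
  · have hWb : packMatrixVec W b ∈ sumZero p J := h
    rw [hL0 _ _ hs_mem, hL0 _ _ hWb]
    exact hb.isMin hsymm hq0 _ _
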